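/- arXiv:2308.13120 — 2 statements merged into one kernel-verified Lean document; each statement's English description precedes it below -/
import Mathlib

section
/- (Radford) Let H be a co-Frobenius Hopf algebra over a field k, i.e., a Hopf algebra admitting a nonzero left integral ∫ : H → k. Then the antipode S : H → H is bijective. -/
/-!
Write `Λ : H ⊗ H → H` for the contraction `a ⊗ b ↦ f b • a`, where `f` is a nonzero left integral,
so that `Λ (Δ x) = f x • 1`. Three facts carry the proof.

* `contractSnd_mul_comul`: `y₁ f(x y₂) = S(x₁) f(x₂ y)`.
* `contractSnd_comul_mul_antipode`: `x₁ f(x₂ S(y)) = f(x S(y₁)) y₂`.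
* `eq_zero_of_integral_mul_eq_zero`: the pairing `(x, z) ↦ f(x z)` is nondegenerate in `z`. Its
  radical `N` is a left ideal and, by the first identity, satisfies `Δ N ⊆ H ⊗ N`. If `z ∈ N`, then
  `ε(z) 1 = S(z₁) z₂ ∈ N`, which forces `ε(z) = 0` because `f ≠ 0`; hence `z = z₁ ε(z₂) = 0`.

Injectivity: if `S(y) = 0`, the second identity gives `f(x S(y₁)) y₂ = 0` for all `x`, so
`S(y₁) ⊗ y₂ = 0` by nondegeneracy, and applying `ε ⊗ id` yields `y = 0`.

Surjectivity: if a functional `φ` kills the range of `S`, the first identity gives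
`f(x φ(y₁) y₂) = φ(y₁) f(x y₂) = 0` for all `x`, so `φ(y₁) y₂ = 0` by nondegeneracy, and applying
`ε` yields `φ(y) = 0`.

Both identities come from relations in the convolution algebra `Hom(H, H ⊗ H)`, where
`Δ = (a ↦ a ⊗ 1) * (a ↦ 1 ⊗ a)`.
-/

open TensorProduct

/-- A left integral on a Hopf algebra `H` over `k` is a linear functional `f : H → k`
such that `(id ⊗ f)(Δ x) = f x • 1` for all `x`, i.e. `x₍₁₎ • f x₍₂₎ = f x • 1`. -/
def IsLeftIntegral (k : Type*) [CommRing k] (H : Type*) [Ring H] [HopfAlgebra k H]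
    (f : H →ₗ[k] k) : Prop :=
  ∀ x : H, (TensorProduct.rid k H) (LinearMap.lTensor H f (Coalgebra.comul x)) = f x • (1 : H)

open Coalgebra HopfAlgebra WithConv

section Convolution

variable (k : Type*) [Field k] (H : Type*) [Ring H] [HopfAlgebra k H]

/-- The map `a ↦ a ⊗ 1` as an element of the convolution algebra. -/
noncomputable def convInl : WithConv (H →ₗ[k] H ⊗[k] H) :=
  toConv (Algebra.TensorProduct.includeLeft : H →ₐ[k] H ⊗[k] H).toLinearMap

/-- The map `a ↦ 1 ⊗ a` as an element of the convolution algebra. -/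
noncomputable def convInr : WithConv (H →ₗ[k] H ⊗[k] H) :=
  toConv (Algebra.TensorProduct.includeRight : H →ₐ[k] H ⊗[k] H).toLinearMap

theorem convInl_mul_convInr :
    convInl k H * convInr k H = toConv (comul : H →ₗ[k] H ⊗[k] H) := by
  ext y
  rw [(ℛ k y).convMul_apply]
  simp [convInl, convInr, (ℛ k y).eq]

variable {k H}

/-- Composing an algebra map with the antipode gives a left convolution inverse of it. -/
theorem algHom_antipode_convMul {B : Type*} [Ring B] [Algebra k B] (g : H →ₐ[k] B) :
    toConv (g.toLinearMap ∘ₗ antipode k) * toConv g.toLinearMap = 1 := by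
  have h := LinearMap.algHom_comp_convMul_distrib g (toConv (antipode k (A := H)))
    (toConv LinearMap.id)
  rw [LinearMap.antipode_mul_id] at h
  apply WithConv.ofConv_injective
  refine Eq.trans h.symm ?_
  ext y
  simp

/-- Composing an algebra map with the antipode gives a right convolution inverse of it. -/
theorem algHom_convMul_antipode {B : Type*} [Ring B] [Algebra k B] (g : H →ₐ[k] B) :
    toConv g.toLinearMap * toConv (g.toLinearMap ∘ₗ antipode k) = 1 := by
  have h := LinearMap.algHom_comp_convMul_distrib g (toConv LinearMap.id)
    (toConv (antipode k (A := H)))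
  rw [LinearMap.id_mul_antipode] at h
  apply WithConv.ofConv_injective
  refine Eq.trans h.symm ?_
  ext y
  simp

/-- `(S(x₁) ⊗ 1) Δ(x₂) = 1 ⊗ x`. -/
theorem sum_antipode_tmul_one_mul_comul {ι : Type*} {x : H} (r : Repr k x ι) :
    ∑ i ∈ r.index, (antipode k (r.left i) ⊗ₜ[k] (1 : H)) * comul (r.right i) =
      (1 : H) ⊗ₜ[k] x := by
  have h : toConv ((Algebra.TensorProduct.includeLeft : H →ₐ[k] H ⊗[k] H).toLinearMap ∘ₗ
      antipode k) * toConv (comul : H →ₗ[k] H ⊗[k] H) = convInr k H := by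
    rw [← convInl_mul_convInr, ← mul_assoc, convInl, algHom_antipode_convMul, one_mul]
  have h2 := congr($h x)
  rw [r.convMul_apply] at h2
  simpa [convInr] using h2

/-- `Δ(S(y₁)) (y₂ ⊗ 1) = 1 ⊗ S(y)`, a form of the anti-comultiplicativity of the antipode. -/
theorem sum_comul_antipode_mul_tmul_one {ι : Type*} {y : H} (r : Repr k y ι) :
    ∑ i ∈ r.index, comul (antipode k (r.left i)) * (r.right i ⊗ₜ[k] (1 : H)) =
      (1 : H) ⊗ₜ[k] antipode k y := by
  have h : toConv ((Bialgebra.comulAlgHom k H).toLinearMap ∘ₗ antipode k) * convInl k H =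
      toConv ((Algebra.TensorProduct.includeRight : H →ₐ[k] H ⊗[k] H).toLinearMap ∘ₗ
        antipode k) := by
    have hδ : convInl k H * convInr k H = toConv (Bialgebra.comulAlgHom k H).toLinearMap :=
      convInl_mul_convInr k H
    have h1 := algHom_antipode_convMul (Bialgebra.comulAlgHom k H)
    have h2 := algHom_convMul_antipode
      (Algebra.TensorProduct.includeRight : H →ₐ[k] H ⊗[k] H)
    rw [← hδ, ← mul_assoc] at h1
    exact left_inv_eq_right_inv h1 h2
  have h2 := congr($h y)
  rw [r.convMul_apply] at h2
  simpa [convInl] using h2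

end Convolution

section Integral

variable {k : Type*} [Field k] {H : Type*} [Ring H] [HopfAlgebra k H]

/-- The contraction `a ⊗ b ↦ f b • a` of the second tensor factor. -/
noncomputable def contractSnd (f : H →ₗ[k] k) : H ⊗[k] H →ₗ[k] H :=
  (TensorProduct.rid k H).toLinearMap ∘ₗ LinearMap.lTensor H f

@[simp]
theorem contractSnd_tmul (f : H →ₗ[k] k) (a b : H) :
    contractSnd f (a ⊗ₜ[k] b) = f b • a := by
  simp [contractSnd]

theorem contractSnd_tmul_one_mul (f : H →ₗ[k] k) (a : H) (t : H ⊗[k] H) :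
    contractSnd f ((a ⊗ₜ[k] (1 : H)) * t) = a * contractSnd f t := by
  induction t with
  | zero => simp
  | tmul b c => simp
  | add s t hs ht => simp [mul_add, hs, ht]

theorem contractSnd_mul_tmul_one (f : H →ₗ[k] k) (a : H) (t : H ⊗[k] H) :
    contractSnd f (t * (a ⊗ₜ[k] (1 : H))) = contractSnd f t * a := by
  induction t with
  | zero => simp
  | tmul b c => simp
  | add s t hs ht => simp [add_mul, hs, ht]

variable {f : H →ₗ[k] k}

theorem contractSnd_comul (hf : IsLeftIntegral k H f) (x : H) :
    contractSnd f (comul x) = f x • (1 : H) := hf x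

/-- `y₁ f(x y₂) = S(x₁) f(x₂ y)`. -/
theorem contractSnd_mul_comul (hf : IsLeftIntegral k H f) {ι : Type*} {x : H} (y : H)
    (r : Repr k x ι) :
    contractSnd f (((1 : H) ⊗ₜ[k] x) * comul y) =
      ∑ i ∈ r.index, f (r.right i * y) • antipode k (r.left i) := by
  rw [← sum_antipode_tmul_one_mul_comul r, Finset.sum_mul, map_sum]
  refine Finset.sum_congr rfl fun i _ => ?_
  rw [mul_assoc, ← Bialgebra.comul_mul, contractSnd_tmul_one_mul, contractSnd_comul hf]
  simp

/-- `x₁ f(x₂ S(y)) = f(x S(y₁)) y₂`. -/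
theorem contractSnd_comul_mul_antipode (hf : IsLeftIntegral k H f) {ι : Type*} (x : H) {y : H}
    (r : Repr k y ι) :
    contractSnd f (comul x * ((1 : H) ⊗ₜ[k] antipode k y)) =
      ∑ i ∈ r.index, f (x * antipode k (r.left i)) • r.right i := by
  rw [← sum_comul_antipode_mul_tmul_one r, Finset.mul_sum, map_sum]
  refine Finset.sum_congr rfl fun i _ => ?_
  rw [← mul_assoc, ← Bialgebra.comul_mul, contractSnd_mul_tmul_one, contractSnd_comul hf]
  simp

/-- For `z` in the radical of `(x, z) ↦ f (x * z)`, the second tensor legs of `Δ z` can be chosen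
in the radical. -/
theorem exists_repr_right_mem_radical (hf : IsLeftIntegral k H f) {z : H}
    (hz : ∀ x, f (x * z) = 0) :
    ∃ r : Repr k z (Module.Basis.ofVectorSpaceIndex k H),
      ∀ i ∈ r.index, ∀ x, f (x * r.right i) = 0 := by
  let b := Module.Basis.ofVectorSpace k H
  obtain ⟨c, hc⟩ := TensorProduct.eq_repr_basis_left b (comul (R := k) z)
  refine ⟨⟨c.support, b, c, hc⟩, fun i hi x => ?_⟩
  have h0 : contractSnd f (((1 : H) ⊗ₜ[k] x) * comul z) = 0 := by
    rw [contractSnd_mul_comul hf z (ℛ k x)]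
    exact Finset.sum_eq_zero fun j _ => by rw [hz, zero_smul]
  rw [← hc, Finsupp.sum, Finset.mul_sum, map_sum] at h0
  simp only [Algebra.TensorProduct.tmul_mul_tmul, one_mul, contractSnd_tmul] at h0
  exact linearIndependent_iff'.1 b.linearIndependent c.support _ h0 i hi

theorem counit_eq_zero_of_integral_mul_eq_zero (hf : IsLeftIntegral k H f) (hf0 : f ≠ 0) {z : H}
    (hz : ∀ x, f (x * z) = 0) : counit (R := k) z = 0 := by
  obtain ⟨r, hr⟩ := exists_repr_right_mem_radical hf hz
  by_contra hne
  apply hf0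
  ext x
  have h := congr(f (x * $(sum_antipode_mul_eq_smul r)))
  rw [Finset.mul_sum, map_sum, Finset.sum_eq_zero] at h
  · simpa [hne] using h.symm
  · intro i hi
    rw [← mul_assoc, hr i hi]

/-- Nondegeneracy of the pairing `(x, z) ↦ f (x * z)` in its second argument. -/
theorem eq_zero_of_integral_mul_eq_zero (hf : IsLeftIntegral k H f) (hf0 : f ≠ 0) {z : H}
    (hz : ∀ x, f (x * z) = 0) : z = 0 := by
  obtain ⟨r, hr⟩ := exists_repr_right_mem_radical hf hz
  have h := congr(TensorProduct.rid k H $(sum_tmul_counit_eq r))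
  rw [map_sum, Finset.sum_eq_zero] at h
  · simpa using h.symm
  · intro i hi
    rw [counit_eq_zero_of_integral_mul_eq_zero hf hf0 (hr i hi), TensorProduct.tmul_zero, map_zero]

theorem antipode_injective_of_integral (hf : IsLeftIntegral k H f) (hf0 : f ≠ 0) :
    Function.Injective (antipode k (A := H)) := by
  rw [injective_iff_map_eq_zero]
  intro y hy
  let r := ℛ k y
  rw [← Module.forall_dual_apply_eq_zero_iff k]
  intro φ
  have h1 : ∑ i ∈ r.index, φ (r.right i) • antipode k (r.left i) = 0 := by
    refine eq_zero_of_integral_mul_eq_zero hf hf0 fun x => ?_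
    have h := contractSnd_comul_mul_antipode hf x r
    rw [hy, TensorProduct.tmul_zero, mul_zero, map_zero] at h
    have h2 := congr(φ $h)
    simp only [map_zero, map_sum, map_smul, smul_eq_mul] at h2
    simp only [Finset.mul_sum, map_sum, mul_smul_comm, map_smul, smul_eq_mul]
    rw [h2]
    exact Finset.sum_congr rfl fun i _ => mul_comm _ _
  have h3 := congr(counit (R := k) $h1)
  have h4 := congr(φ $(sum_counit_smul r))
  simp only [map_zero, map_sum, map_smul, smul_eq_mul, counit_antipode] at h3 h4
  rw [← h4, ← h3]
  exact Finset.sum_congr rfl fun i _ => mul_comm _ _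

theorem antipode_surjective_of_integral (hf : IsLeftIntegral k H f) (hf0 : f ≠ 0) :
    Function.Surjective (antipode k (A := H)) := by
  rw [← LinearMap.range_eq_top]
  by_contra hne
  obtain ⟨φ, hφ0, hφ⟩ := Submodule.exists_le_ker_of_lt_top _ (lt_top_iff_ne_top.2 hne)
  have hφS : ∀ x, φ (antipode k x) = 0 := fun x => hφ ⟨x, rfl⟩
  apply hφ0
  ext y
  let r := ℛ k y
  have h1 : ∑ i ∈ r.index, φ (r.left i) • r.right i = 0 := by
    refine eq_zero_of_integral_mul_eq_zero hf hf0 fun x => ?_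
    have h := congr(φ $(contractSnd_mul_comul hf y (ℛ k x)))
    rw [← r.eq, Finset.mul_sum] at h
    simp only [map_sum, map_smul, hφS, mul_zero, Finset.sum_const_zero,
      Algebra.TensorProduct.tmul_mul_tmul, one_mul, contractSnd_tmul, smul_eq_mul] at h
    simp only [Finset.mul_sum, map_sum, mul_smul_comm, map_smul, smul_eq_mul]
    rw [← h]
    exact Finset.sum_congr rfl fun i _ => mul_comm _ _
  have h3 := congr(counit (R := k) $h1)
  have h4 := congr(φ (TensorProduct.rid k H $(sum_tmul_counit_eq r)))
  simp only [map_zero, map_sum, map_smul, smul_eq_mul, TensorProduct.rid_tmul, one_smul] at h3 h4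
  rw [← h4, LinearMap.zero_apply, ← h3]
  exact Finset.sum_congr rfl fun i _ => mul_comm _ _

end Integral

/-- (Radford) The antipode of a co-Frobenius Hopf algebra, i.e. one admitting a nonzero
left integral, is bijective. -/
theorem antipode_bijective_of_coFrobenius (k : Type*) [Field k]
    (H : Type*) [Ring H] [HopfAlgebra k H]
    (hcf : ∃ f : H →ₗ[k] k, f ≠ 0 ∧ IsLeftIntegral k H f) :
    Function.Bijective (HopfAlgebra.antipode (R := k) (A := H)) := by
  obtain ⟨f, hf0, hf⟩ := hcf
  exact ⟨antipode_injective_of_integral hf hf0, antipode_surjective_of_integral hf hf0⟩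
end

section
/- (Nichols–Zöller) Let k be a field, let A and H be finite-dimensional Hopf algebras over k, and let f : A → H be an injective homomorphism of k-bialgebras. Then H, regarded as a left A-module via f (a • h = f(a)·h), is a free A-module. -/
/-!
Write `n = dim H` and, for a finite-dimensional `A`-module `V`, `h(V) = dim Hom_A(H, V)`.
Let `A⁺H` be the span of the elements `f a * h - ε(a) h`, and `d = dim (H / A⁺H) = h(k)`, with `k`
the trivial module. The proof produces a surjection `A^d → H` and shows that it is injective; the
Krull–Schmidt theorem, the Frobenius property of `A` and the bijectivity of the antipode are not
used.

*The bound `h(V) ≤ d · dim V`* (`isBound_quotient`). Let `A` act on `V' = Hom_k(H, V)` by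
`(a g)(y) = a₁ g(S(a₂) y)`. Untwisting by `h ⊗ y ↦ h₁ ⊗ S(h₂) y` gives
`h(V') ≥ n h(V)`, and `T = Hom_A(H, V) ⊆ V'` is a trivial submodule of dimension `h(V)`. If
`h(W) ≤ c · dim W` for all `W`, left exactness of `Hom_A(H, -)` for `T ⊆ V'` gives
`n h(V) ≤ d h(V) + c (n dim V - h(V))`. For `c > d` this is a better bound than `c`, so the best
constant is at most `d`.

*The surjection* (`exists_surjective_of_finrank_hom_le`). Over a finite-dimensional algebra, a
module `M` with `dim Hom_A(M, C) ≤ d · dim C` for all submodules `C` of `M / rad M` is generated by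
`d` elements: the bound forces a map `A^d → M / rad M` with minimal kernel to be onto, and it lifts
to a surjection onto `M` by projectivity and Nakayama's argument.

*Injectivity* (`injective_of_surjective`). The map `c(h) = h₁ ⊗ [h₂]` from `H` to `H ⊗ H/A⁺H` is
`A`-linear for the action on the left tensor factor, and its image generates `H ⊗ H/A⁺H` over `H`
because `y ⊗ [h] = y S(h₁) c(h₂)`. Hence if `g₁, …, g_d` generate `H` over `A`, then the `c(g_i)`
generate `H ⊗ H/A⁺H` over `H`; as this space has dimension `n d`, the map `H^d → H ⊗ H/A⁺H` is
bijective. Applying `c` to a relation `∑ f(x_i) g_i = 0` then gives `f(x_i) = 0`, so `x_i = 0`.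
-/

open Module TensorProduct

namespace NicholsZoeller

/-! ### Modules generated by `d` elements -/

section Generators

variable {k A : Type*} [Field k] [Ring A] [Algebra k A]

lemma finrank_hom_pi {d : ℕ} {C : Type*} [AddCommGroup C] [Module k C] [Module A C]
    [IsScalarTower k A C] [FiniteDimensional k C] :
    finrank k ((Fin d → A) →ₗ[A] C) = d * finrank k C := by
  have e : (Fin d → C) ≃ₗ[k] ((Fin d → A) →ₗ[A] C) := (Pi.basisFun A (Fin d)).constr k
  rw [← e.finrank_eq, Module.finrank_pi_fintype]
  simp

lemma finiteDimensional_hom {M C : Type*} [AddCommGroup M] [Module k M] [Module A M]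
    [IsScalarTower k A M] [FiniteDimensional k M] [AddCommGroup C] [Module k C] [Module A C]
    [IsScalarTower k A C] [FiniteDimensional k C] : FiniteDimensional k (M →ₗ[A] C) :=
  FiniteDimensional.of_injective (LinearMap.restrictScalarsₗ k A M C k)
    (LinearMap.restrictScalars_injective k)

/-- The semisimple case: if a map `φ : A^d → M` with minimal kernel is not onto, take a complement
`C` of its range. Comparing dimensions, some `g : A^d → C` does not factor through `φ`, and then
`φ + g` has strictly smaller kernel. -/
theorem exists_surjective_of_isSemisimpleModule [FiniteDimensional k A] {M : Type*}
    [AddCommGroup M] [Module k M] [Module A M] [IsScalarTower k A M] [FiniteDimensional k M]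
    [IsSemisimpleModule A M] (d : ℕ)
    (hd : ∀ C : Submodule A M, finrank k (M →ₗ[A] C) ≤ d * finrank k C) :
    ∃ φ : (Fin d → A) →ₗ[A] M, Function.Surjective φ := by
  classical
  obtain ⟨φ, hφ⟩ : ∃ φ : (Fin d → A) →ₗ[A] M,
      ∀ ψ : (Fin d → A) →ₗ[A] M, ¬ LinearMap.ker ψ < LinearMap.ker φ := by
    have : IsArtinian A (Fin d → A) := isArtinian_of_tower k inferInstance
    obtain ⟨N, ⟨φ, rfl⟩, h⟩ := (wellFounded_lt (α := Submodule A (Fin d → A))).has_min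
      (Set.range fun φ : (Fin d → A) →ₗ[A] M => LinearMap.ker φ) ⟨_, 0, rfl⟩
    exact ⟨φ, fun ψ => h _ ⟨ψ, rfl⟩⟩
  refine ⟨φ, ?_⟩
  by_contra hns
  obtain ⟨C, hC⟩ := exists_isCompl (LinearMap.range φ)
  have hfin : FiniteDimensional k C := FiniteDimensional.finiteDimensional_submodule (C.restrictScalars k)
  let pre : (M →ₗ[A] C) →ₗ[k] ((Fin d → A) →ₗ[A] C) := LinearMap.lcomp k C φ
  -- the projection onto `C` along the range of `φ` is killed by precomposition with `φ`
  have hninj : ¬ Function.Injective pre := by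
    intro hinj
    have h0 : pre (C.projectionOnto _ hC.symm) = pre 0 := by
      refine LinearMap.ext fun x => ?_
      rw [map_zero]
      exact Submodule.projectionOnto_apply_of_mem_right hC.symm ⟨x, rfl⟩
    have h1 := hinj h0
    apply hns
    rw [← LinearMap.range_eq_top]
    have : C = ⊥ := by
      rw [eq_bot_iff]
      intro x hx
      have := LinearMap.congr_fun h1 x
      rw [Submodule.projectionOnto_apply_of_mem_left hC.symm hx] at this
      simpa using this
    have := hC.sup_eq_top
    simp_all
  have e : (Fin d → C) ≃ₗ[k] ((Fin d → A) →ₗ[A] C) := (Pi.basisFun A (Fin d)).constr k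
  have : FiniteDimensional k ((Fin d → A) →ₗ[A] C) := e.finiteDimensional
  have : FiniteDimensional k (M →ₗ[A] C) := finiteDimensional_hom
  have hnsurj : ¬ Function.Surjective pre := by
    intro hs
    apply hninj
    have h1 := LinearMap.finrank_le_finrank_of_surjective hs
    have h2 := hd C
    rw [← finrank_hom_pi (A := A)] at h2
    exact (LinearMap.injective_iff_surjective_of_finrank_eq_finrank (le_antisymm h2 h1)).2 hs
  simp only [Function.Surjective, not_forall, not_exists] at hnsurj
  obtain ⟨g, hg⟩ := hnsurj
  -- a map killing `ker φ` is defined on the range of `φ`, hence extends to `M` by zero on `C`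
  have hgk : ¬ LinearMap.ker φ ≤ LinearMap.ker g := by
    intro hle
    let g1 : LinearMap.range φ →ₗ[A] C :=
      ((LinearMap.ker φ).liftQ g hle) ∘ₗ φ.quotKerEquivRange.symm.toLinearMap
    refine hg (g1 ∘ₗ (LinearMap.range φ).projectionOnto C hC) ?_
    refine LinearMap.ext fun x => ?_
    have : (LinearMap.range φ).projectionOnto C hC (φ x) = ⟨φ x, x, rfl⟩ :=
      Submodule.projectionOnto_apply_left hC ⟨φ x, x, rfl⟩
    change g1 ((LinearMap.range φ).projectionOnto C hC (φ x)) = g x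
    rw [this]
    have h2 : φ.quotKerEquivRange.symm ⟨φ x, x, rfl⟩ = Submodule.Quotient.mk x := by
      rw [LinearEquiv.symm_apply_eq]; rfl
    simp [g1, h2]
  apply hφ (φ + C.subtype ∘ₗ g)
  have hker : LinearMap.ker (φ + C.subtype ∘ₗ g) ≤ LinearMap.ker φ ⊓ LinearMap.ker g := by
    intro x hx
    have hx' : φ x = - (g x : M) := eq_neg_of_add_eq_zero_left hx
    have h1 : φ x = 0 := (Submodule.disjoint_def.1 hC.disjoint) _ ⟨x, rfl⟩
      (by rw [hx']; exact C.neg_mem (g x).2)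
    refine ⟨h1, ?_⟩
    rw [h1] at hx'
    simpa using hx'.symm
  refine lt_of_le_of_ne (hker.trans inf_le_left) fun h => hgk ?_
  exact fun x hx => (hker (h ▸ hx)).2

/-- A module `M` with `dim Hom_A(M, C) ≤ d · dim C` for all submodules `C` of `M / rad M` is
generated by `d` elements. Here `rad M` is the intersection of the maximal submodules. -/
theorem exists_surjective_of_finrank_hom_le [FiniteDimensional k A] {M : Type*}
    [AddCommGroup M] [Module k M] [Module A M] [IsScalarTower k A M] [FiniteDimensional k M]
    (d : ℕ) (hd : ∀ C : Submodule A (M ⧸ Module.jacobson A M),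
      finrank k (M →ₗ[A] C) ≤ d * finrank k C) :
    ∃ φ : (Fin d → A) →ₗ[A] M, Function.Surjective φ := by
  set J := Module.jacobson A M with hJ
  have : IsArtinian A M := isArtinian_of_tower k inferInstance
  have : IsNoetherian A M := isNoetherian_of_tower k inferInstance
  have : FiniteDimensional k (M ⧸ J) :=
    FiniteDimensional.of_surjective (J.mkQ.restrictScalars k) J.mkQ_surjective
  have : IsSemisimpleModule A (M ⧸ J) :=
    (IsArtinian.isSemisimpleModule_iff_jacobson A _).2 (Module.jacobson_quotient_jacobson A M)
  obtain ⟨φ, hφ⟩ := exists_surjective_of_isSemisimpleModule (k := k) (A := A) (M := M ⧸ J) d (by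
    intro C
    have : FiniteDimensional k C := FiniteDimensional.finiteDimensional_submodule (C.restrictScalars k)
    refine le_trans ?_ (hd C)
    have : FiniteDimensional k (M →ₗ[A] C) := finiteDimensional_hom
    refine LinearMap.finrank_le_finrank_of_injective
      (f := (LinearMap.lcomp k C J.mkQ : ((M ⧸ J) →ₗ[A] C) →ₗ[k] (M →ₗ[A] C))) ?_
    intro a b hab
    exact Submodule.linearMap_qext _ hab)
  obtain ⟨ψ, hψ⟩ := Module.projective_lifting_property J.mkQ φ J.mkQ_surjective
  refine ⟨ψ, ?_⟩
  rw [← LinearMap.range_eq_top]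
  by_contra hne
  obtain ⟨P, hP, hle⟩ := (eq_top_or_exists_le_coatom (LinearMap.range ψ)).resolve_left hne
  apply hP.1
  rw [eq_top_iff]
  intro x _
  obtain ⟨y, hy⟩ := hφ (J.mkQ x)
  have h1 : x - ψ y ∈ J := by
    rw [← hψ] at hy
    rw [← Submodule.ker_mkQ J, LinearMap.mem_ker, map_sub, ← hy]
    simp
  have h2 : x - ψ y ∈ P := (sInf_le hP : J ≤ P) h1
  have := P.add_mem h2 (hle ⟨y, rfl⟩)
  simpa using this

end Generators

/-! ### The antipode and the module `Hom_k(H, V)` -/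

section Hopf

open Coalgebra HopfAlgebra

universe v

variable {k A H : Type*} [Field k] [Ring A] [Ring H] [HopfAlgebra k A] [HopfAlgebra k H]
variable (f : A →ₐc[k] H)

/-- Both `f ∘ S` and `S ∘ f` are convolution inverses of `f`. -/
lemma map_antipode (a : A) : f (antipode k a) = antipode k (f a) := by
  let fl : A →ₗ[k] H := (f : A →ₐ[k] H).toLinearMap
  have h1 : WithConv.toConv (fl ∘ₗ antipode k) * WithConv.toConv fl = 1 := by
    ext x
    rw [(ℛ k x).convMul_apply]
    have := congrArg fl (sum_antipode_mul_eq_algebraMap_counit (ℛ k x))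
    simp only [fl, map_sum, AlgHom.toLinearMap_apply, map_mul, AlgHom.commutes] at this
    simpa [fl] using this
  have h2 : WithConv.toConv fl * WithConv.toConv (antipode k ∘ₗ fl) = 1 := by
    ext x
    have h := mul_antipode_lTensor_comul_apply (R := k) (f x)
    rw [← CoalgHomClass.map_comp_comul_apply, CoalgHomClass.counit_comp_apply] at h
    rw [← (ℛ k x).eq] at h
    rw [(ℛ k x).convMul_apply]
    simpa [fl, map_sum] using h
  have := left_inv_eq_right_inv h1 h2
  exact congrArg (fun g => g.ofConv a) this

variable {V : Type*} [AddCommGroup V] [Module k V]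

/-- The space of `A`-linear maps `H → V`, where `A` acts on `H` through `f` and on `V` through the
representation `ρ`, as a subspace of the `k`-linear maps. -/
def homs (ρ : A →ₐ[k] End k V) : Submodule k (H →ₗ[k] V) where
  carrier := {g | ∀ a h, g (f a * h) = ρ a (g h)}
  add_mem' hx hy a h := by simp [hx a h, hy a h]
  zero_mem' := by simp
  smul_mem' c x hx a h := by simp [hx a h]

/-- The action of `A ⊗ A` on `Hom_k(H, V)` given by `((a ⊗ b) g)(y) = a g(S(b) y)`. -/
noncomputable def biRep (ρ : A →ₐ[k] End k V) : A ⊗[k] A →ₐ[k] End k (H →ₗ[k] V) :=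
  Algebra.TensorProduct.lift
    (AlgHom.ofLinearMap ((LinearMap.llcomp k H V V) ∘ₗ ρ.toLinearMap)
      (by ext; simp) (by intro x y; ext; simp))
    (AlgHom.ofLinearMap ((LinearMap.llcomp k H H V).flip ∘ₗ LinearMap.mul k H ∘ₗ
        antipode k ∘ₗ (f : A →ₐ[k] H).toLinearMap)
      (by ext; simp) (by intro x y; ext; simp [antipode_mul_antidistrib, mul_assoc]))
    (fun a b => by rw [commute_iff_eq]; ext; simp)

@[simp] lemma biRep_tmul (ρ : A →ₐ[k] End k V) (a b : A) (g : H →ₗ[k] V) (y : H) :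
    biRep f ρ (a ⊗ₜ b) g y = ρ a (g (antipode k (f b) * y)) := by
  rw [biRep, Algebra.TensorProduct.lift_tmul]
  simp

/-- The representation of `A` on `Hom_k(H, V)` given by `(a g)(y) = a₁ g(S(a₂) y)`. -/
noncomputable def homRep (ρ : A →ₐ[k] End k V) : A →ₐ[k] End k (H →ₗ[k] V) :=
  (biRep f ρ).comp (Bialgebra.comulAlgHom k A)

/-- `A`-linear maps are invariants of `Hom_k(H, V)`: `a₁ g(S(a₂) y) = a₁ S(a₂) g(y) = ε(a) g(y)`. -/
lemma homRep_of_mem (ρ : A →ₐ[k] End k V) {g : H →ₗ[k] V} (hg : g ∈ homs f ρ) (a : A) :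
    homRep f ρ a g = counit (R := k) a • g := by
  ext y
  have key : ∀ t : A ⊗[k] A, biRep f ρ t g y =
      ρ (LinearMap.mul' k A ((antipode k).lTensor A t)) (g y) := by
    intro t
    induction t with
    | zero => simp
    | add x y hx hy => simp [hx, hy]
    | tmul a b =>
      rw [biRep_tmul, ← map_antipode, hg]
      simp
  simp only [homRep, AlgHom.comp_apply, Bialgebra.comulAlgHom_apply]
  rw [key, mul_antipode_lTensor_comul_apply]
  simp [Algebra.algebraMap_eq_smul_one]

/-- The map `x ⊗ z ↦ (y ↦ Ψ (S(z) y) x)`. Composed with the comultiplication of `H` it turns a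
family `Ψ : H → Hom_A(H, V)` into an `A`-linear map `H → Hom_k(H, V)`. -/
noncomputable def twist (Ψ : H →ₗ[k] (H →ₗ[k] V)) : H ⊗[k] H →ₗ[k] (H →ₗ[k] V) :=
  TensorProduct.lift
    ((LinearMap.llcomp k H H V ∘ₗ Ψ.flip).compl₂ (LinearMap.mul k H ∘ₗ antipode k))

@[simp] lemma twist_tmul (Ψ : H →ₗ[k] (H →ₗ[k] V)) (x z y : H) :
    twist Ψ (x ⊗ₜ z) y = Ψ (antipode k z * y) x := by
  simp [twist]

lemma twist_mul (ρ : A →ₐ[k] End k V) (Ψ : H →ₗ[k] (H →ₗ[k] V)) (hΨ : ∀ y, Ψ y ∈ homs f ρ)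
    (t : A ⊗[k] A) (s : H ⊗[k] H) :
    twist Ψ (TensorProduct.map (f : A →ₗ[k] H) (f : A →ₗ[k] H) t * s) = biRep f ρ t (twist Ψ s) := by
  induction t with
  | zero => simp
  | add x y hx hy => simp [add_mul, hx, hy]
  | tmul a b =>
    induction s with
    | zero => simp
    | add x y hx hy => rw [mul_add, map_add, map_add, map_add, hx, hy]
    | tmul x z =>
      ext y
      simp [antipode_mul_antidistrib, mul_assoc, hΨ _ a x]

lemma twist_comul_mem (ρ : A →ₐ[k] End k V) (Ψ : H →ₗ[k] (H →ₗ[k] V))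
    (hΨ : ∀ y, Ψ y ∈ homs f ρ) : twist Ψ ∘ₗ comul ∈ homs f (homRep f ρ) := by
  intro a h
  have := twist_mul f ρ Ψ hΨ (comul a) (comul h)
  simp only [LinearMap.comp_apply, Bialgebra.comul_mul, homRep, AlgHom.comp_apply,
    Bialgebra.comulAlgHom_apply]
  rw [← this, ← CoalgHomClass.map_comp_comul_apply]

/-- `Ψ` is recovered from `φ = twist Ψ ∘ comul` by `Ψ y h = φ(h₁)(h₂ y)`. -/
lemma eq_zero_of_twist_comul_eq_zero (Ψ : H →ₗ[k] (H →ₗ[k] V)) (h0 : twist Ψ ∘ₗ comul = 0) : Ψ = 0 := by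
  ext y h
  -- `K ((x ⊗ z) ⊗ w) = Ψ (S(z) w y) x`
  let K : (H ⊗[k] H) ⊗[k] H →ₗ[k] V :=
    TensorProduct.lift ((twist Ψ).compl₂ (LinearMap.mulRight k y))
  have h1 : K (comul.rTensor H (comul h)) = 0 := by
    have : K ∘ₗ comul.rTensor H = 0 := by
      ext x w
      have := LinearMap.congr_fun (LinearMap.congr_fun h0 x) (w * y)
      simpa [K] using this
    exact LinearMap.congr_fun this (comul h)
  have h2 : ∀ (x : H) (t : H ⊗[k] H), K ((TensorProduct.assoc k H H H).symm (x ⊗ₜ t)) =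
      Ψ (LinearMap.mul' k H ((antipode k).rTensor H t) * y) x := by
    intro x t
    induction t with
    | zero => simp
    | add a b ha hb => simp [TensorProduct.tmul_add, add_mul, ha, hb]
    | tmul a b => simp [K, mul_assoc]
  have h3 : K ∘ₗ (TensorProduct.assoc k H H H).symm.toLinearMap ∘ₗ comul.lTensor H =
      Ψ y ∘ₗ (TensorProduct.rid k H).toLinearMap ∘ₗ counit.lTensor H := by
    ext x w
    simp [h2, Algebra.algebraMap_eq_smul_one]
  have h4 := LinearMap.congr_fun h3 (comul h)
  simp only [LinearMap.comp_apply, LinearEquiv.coe_coe, coassoc_symm_apply, h1,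
    lTensor_counit_comul] at h4
  simpa using h4.symm

lemma twist_comul_injective :
    Function.Injective fun Ψ : H →ₗ[k] (H →ₗ[k] V) => twist Ψ ∘ₗ (comul (R := k)) := by
  intro Ψ Ψ' h
  have hsub : twist (Ψ - Ψ') = twist Ψ - twist Ψ' := by ext; simp
  refine sub_eq_zero.1 (eq_zero_of_twist_comul_eq_zero _ ?_)
  rw [hsub, LinearMap.sub_comp]
  exact sub_eq_zero.2 h

lemma finrank_mul_finrank_homs_le [FiniteDimensional k H] [FiniteDimensional k V]
    (ρ : A →ₐ[k] End k V) :
    finrank k H * finrank k (homs f ρ) ≤ finrank k (homs f (homRep f ρ)) := by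
  rw [← finrank_linearMap k k H (homs f ρ)]
  let L : (H →ₗ[k] homs f ρ) →ₗ[k] homs f (homRep f ρ) :=
    { toFun := fun Ψ => ⟨twist ((homs f ρ).subtype ∘ₗ Ψ) ∘ₗ comul,
        twist_comul_mem f ρ _ fun y => (Ψ y).2⟩
      map_add' := by
        intro Ψ Ψ'
        apply Subtype.ext
        have : twist ((homs f ρ).subtype ∘ₗ (Ψ + Ψ')) = twist ((homs f ρ).subtype ∘ₗ Ψ) +
            twist ((homs f ρ).subtype ∘ₗ Ψ') := by ext; simp
        simp [this, LinearMap.add_comp]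
      map_smul' := by
        intro c Ψ
        apply Subtype.ext
        have : twist ((homs f ρ).subtype ∘ₗ (c • Ψ)) = c • twist ((homs f ρ).subtype ∘ₗ Ψ) := by
          ext; simp
        simp [this, LinearMap.smul_comp] }
  refine LinearMap.finrank_le_finrank_of_injective (f := L) ?_
  intro Ψ Ψ' hΨ
  have h := twist_comul_injective (congrArg Subtype.val hΨ)
  ext y : 1
  exact Subtype.ext (LinearMap.congr_fun h y)

/-- The subspace `A⁺H` of `H`, where `A⁺` is the augmentation ideal of `A`. -/
def augSub : Submodule k H :=
  Submodule.span k {x | ∃ a h, x = f a * h - counit (R := k) a • h}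

/-- Left exactness of `Hom_A(H, -)` for `0 → T → V → V / T`, where `T` is a trivial submodule. The
`A`-linear maps `H → V` with values in `T` are the linear maps `H / A⁺H → T`. -/
lemma finrank_homs_le_of_trivial [FiniteDimensional k H] [FiniteDimensional k V]
    (ρ : A →ₐ[k] End k V) (T : Submodule k V)
    (hT : ∀ a, ∀ t ∈ T, ρ a t = counit (R := k) a • t) (c : ℝ)
    (hc : ∀ σ : A →ₐ[k] End k (V ⧸ T), (finrank k (homs f σ) : ℝ) ≤ c * finrank k (V ⧸ T)) :
    (finrank k (homs f ρ) : ℝ) ≤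
      finrank k (H ⧸ augSub f) * finrank k T + c * (finrank k V - finrank k T) := by
  have hle : ∀ a, T ≤ T.comap (ρ a) := fun a t ht => by
    rw [Submodule.mem_comap, hT a t ht]; exact T.smul_mem _ ht
  let σ : A →ₐ[k] End k (V ⧸ T) := AlgHom.ofLinearMap
    { toFun := fun a => T.mapQ T (ρ a) (hle a)
      map_add' := by intro a b; ext; simp
      map_smul' := by intro a b; ext; simp }
    (by ext; simp) (by intro a b; ext; simp)
  let N : homs f ρ →ₗ[k] homs f σ :=
    (LinearMap.llcomp k H V (V ⧸ T) T.mkQ).restrict (fun g hg a h => by simp [σ, hg a h])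
  let E : ((H ⧸ augSub f) →ₗ[k] T) →ₗ[k] (H →ₗ[k] V) :=
    LinearMap.lcomp k V (augSub f).mkQ ∘ₗ LinearMap.llcomp k _ _ _ T.subtype
  have hker : (LinearMap.ker N).map (homs f ρ).subtype ≤ LinearMap.range E := by
    rintro _ ⟨⟨g, hg⟩, hgN, rfl⟩
    have h1 : ∀ h, g h ∈ T := by
      intro h
      have := LinearMap.congr_fun (congrArg Subtype.val hgN) h
      exact (Submodule.Quotient.mk_eq_zero T).1 this
    refine ⟨(augSub f).liftQ (g.codRestrict T h1) ?_, ?_⟩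
    · rw [augSub, Submodule.span_le]
      rintro _ ⟨a, h, rfl⟩
      apply Subtype.ext
      simp [hg a h, hT a _ (h1 h)]
    · ext h; simp [E]
  have h2 : finrank k (LinearMap.ker N) ≤ finrank k (H ⧸ augSub f) * finrank k T := by
    rw [← finrank_linearMap k k (H ⧸ augSub f) T,
      (Submodule.equivMapOfInjective _ (homs f ρ).subtype_injective (LinearMap.ker N)).finrank_eq]
    exact (Submodule.finrank_mono hker).trans (LinearMap.finrank_range_le E)
  have h3 := LinearMap.finrank_range_add_finrank_ker (V := homs f ρ) (V₂ := homs f σ) N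
  have h4 := Submodule.finrank_le (LinearMap.range N)
  have h5 := hc σ
  have h6 := Submodule.finrank_quotient_add_finrank T
  have h7 : (finrank k (V ⧸ T) : ℝ) = finrank k V - finrank k T := by
    rw [← h6]; push_cast; ring
  rw [h7] at h5
  have h8 : (finrank k (homs f ρ) : ℝ) ≤ finrank k (homs f σ) + finrank k (LinearMap.ker N) := by
    exact_mod_cast (by omega)
  have h9 : (finrank k (LinearMap.ker N) : ℝ) ≤ finrank k (H ⧸ augSub f) * finrank k T := by
    exact_mod_cast h2
  linarith

/-! ### The bound on `dim Hom_A(H, V)` -/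

/-- The inequality `dim Hom_A(H, V) ≤ c · dim V` for all finite-dimensional `A`-modules `V` in the
universe of `H`. -/
def IsBound {k A : Type*} {H : Type v} [Field k] [Ring A] [Ring H] [HopfAlgebra k A]
    [HopfAlgebra k H] (f : A →ₐc[k] H) (c : ℝ) : Prop :=
  ∀ (V : Type v) [AddCommGroup V] [Module k V] [FiniteDimensional k V] (ρ : A →ₐ[k] End k V),
    (finrank k (homs f ρ) : ℝ) ≤ c * finrank k V

section Bound

variable {k A : Type*} {H : Type v} [Field k] [Ring A] [Ring H] [HopfAlgebra k A]
  [HopfAlgebra k H] (f : A →ₐc[k] H) [FiniteDimensional k H]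

lemma isBound_finrank : IsBound f (finrank k H) := by
  intro V _ _ _ ρ
  have := Submodule.finrank_le (homs f ρ)
  rw [finrank_linearMap] at this
  exact_mod_cast this

lemma finrank_quotient_augSub_le : finrank k (H ⧸ augSub f) ≤ finrank k H :=
  Submodule.finrank_quotient_le _

/-- The bound `c` for the quotient of `Hom_k(H, V)` by its trivial submodule `Hom_A(H, V)` yields a
bound for `V`, better than `c` when `c > dim (H / A⁺H)`. -/
lemma IsBound.improve {c : ℝ} (hc : IsBound f c) (V : Type v) [AddCommGroup V] [Module k V]
    [FiniteDimensional k V] (ρ : A →ₐ[k] End k V) :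
    (finrank k (homs f ρ) : ℝ) * (finrank k H - finrank k (H ⧸ augSub f) + c) ≤
      c * finrank k H * finrank k V := by
  have h1 := finrank_homs_le_of_trivial f (homRep f ρ) (homs f ρ)
    (fun a t ht => homRep_of_mem f ρ ht a) c (fun σ => hc _ σ)
  have h2 : (finrank k H * finrank k (homs f ρ) : ℝ) ≤ finrank k (homs f (homRep f ρ)) := by
    exact_mod_cast finrank_mul_finrank_homs_le f ρ
  rw [finrank_linearMap] at h1
  push_cast at h1
  linarith

/-- The least bound is at most `dim (H / A⁺H)`, since any larger one can be improved. -/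
theorem isBound_quotient : IsBound f (finrank k (H ⧸ augSub f)) := by
  set d : ℝ := ((finrank k (H ⧸ augSub f) : ℕ) : ℝ) with hd
  set n : ℝ := ((finrank k H : ℕ) : ℝ) with hn
  have hd0 : 0 ≤ d := Nat.cast_nonneg _
  have hdn : d ≤ n := Nat.cast_le.2 (finrank_quotient_augSub_le f)
  by_contra hnb
  let X : Set ℝ := {c | d ≤ c ∧ IsBound f c}
  have hX : X.Nonempty := ⟨n, hdn, isBound_finrank f⟩
  have hXb : BddBelow X := ⟨d, fun c hc => hc.1⟩
  set r := sInf X with hr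
  have hrd : d ≤ r := le_csInf hX fun c hc => hc.1
  have hrB : IsBound f r := by
    intro V _ _ _ ρ
    rcases (Nat.cast_nonneg (finrank k V) : (0 : ℝ) ≤ _).eq_or_lt with h0 | h0
    · obtain ⟨c, hc⟩ := hX
      have := hc.2 V ρ
      rw [← h0] at this ⊢
      simpa using this
    · rw [← div_le_iff₀ h0]
      exact le_csInf hX fun c hc => (div_le_iff₀ h0).2 (hc.2 V ρ)
  have hlt : d < r := lt_of_le_of_ne hrd fun h => hnb (h ▸ hrB)
  have hpos : 0 < n - d + r := by linarith
  have hmem : max d (r * n / (n - d + r)) ∈ X := by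
    refine ⟨le_max_left _ _, ?_⟩
    intro V _ _ _ ρ
    refine le_trans ?_ (mul_le_mul_of_nonneg_right (le_max_right _ _) (Nat.cast_nonneg _))
    rw [div_mul_eq_mul_div, le_div_iff₀ hpos]
    exact hrB.improve f V ρ
  have h1 : r ≤ max d (r * n / (n - d + r)) := csInf_le hXb hmem
  have h2 : r * n / (n - d + r) < r := by
    rw [div_lt_iff₀ hpos]
    nlinarith
  exact absurd h1 (not_le.2 (max_lt hlt h2))

end Bound

/-! ### The map `H → H ⊗ H/A⁺H` -/

section Injective

/-- The map `h ↦ h₁ ⊗ [h₂]` from `H` to `H ⊗ H/A⁺H`. -/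
noncomputable def coact : H →ₗ[k] H ⊗[k] (H ⧸ augSub f) :=
  (augSub f).mkQ.lTensor H ∘ₗ comul

lemma coact_mul (a : A) (h : H) : coact f (f a * h) = f a • coact f h := by
  have key : ∀ (t : A ⊗[k] A) (s : H ⊗[k] H),
      (augSub f).mkQ.lTensor H (TensorProduct.map (f : A →ₗ[k] H) (f : A →ₗ[k] H) t * s) =
      f (TensorProduct.rid k A (counit.lTensor A t)) • (augSub f).mkQ.lTensor H s := by
    intro t s
    induction t with
    | zero => simp
    | add x y hx hy => simp [add_mul, hx, hy, add_smul]
    | tmul a b =>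
      induction s with
      | zero => simp
      | add x y hx hy => rw [mul_add, map_add, map_add, smul_add, hx, hy]
      | tmul x z =>
        have : (augSub f).mkQ (f b * z) = counit (R := k) b • (augSub f).mkQ z := by
          rw [← sub_eq_zero, ← map_smul, ← map_sub, Submodule.mkQ_apply,
            Submodule.Quotient.mk_eq_zero]
          exact Submodule.subset_span ⟨b, z, rfl⟩
        simp only [TensorProduct.map_tmul, Algebra.TensorProduct.tmul_mul_tmul,
          LinearMap.lTensor_tmul, LinearMap.coe_coe, this, TensorProduct.rid_tmul, map_smul,
          TensorProduct.smul_tmul', TensorProduct.tmul_smul, smul_eq_mul, smul_mul_assoc]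
  have := key (comul a) (comul h)
  rw [lTensor_counit_comul, TensorProduct.rid_tmul, one_smul,
    CoalgHomClass.map_comp_comul_apply, ← Bialgebra.comul_mul] at this
  exact this

/-- The generation of `H ⊗ H/A⁺H` by the image of `coact` follows from
`y ⊗ [h] = y S(h₁) coact(h₂)`. -/
lemma span_range_coact : Submodule.span H (Set.range (coact f)) = ⊤ := by
  rw [eq_top_iff]
  rintro t -
  induction t with
  | zero => exact zero_mem _
  | add x y hx hy => exact add_mem hx hy
  | tmul y q =>
    obtain ⟨h, rfl⟩ := (augSub f).mkQ_surjective q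
    -- `G (a ⊗ b) = (y S(a)) • coact b`
    let G : H ⊗[k] H →ₗ[k] H ⊗[k] (H ⧸ augSub f) := TensorProduct.lift
      ((Algebra.lsmul k k (H ⊗[k] (H ⧸ augSub f))).toLinearMap.compl₁₂
        (LinearMap.mulLeft k y ∘ₗ antipode k) (coact f))
    have hGmem : ∀ t, G t ∈ Submodule.span H (Set.range (coact f)) := by
      intro t
      induction t with
      | zero => rw [map_zero]; exact zero_mem _
      | add a b ha hb => rw [map_add]; exact add_mem ha hb
      | tmul a b => exact Submodule.smul_mem _ _ (Submodule.subset_span ⟨b, rfl⟩)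
    -- `G₃ ((x ⊗ z) ⊗ w) = y S(x) z ⊗ [w]`
    let G₃ : (H ⊗[k] H) ⊗[k] H →ₗ[k] H ⊗[k] (H ⧸ augSub f) := TensorProduct.map
      (LinearMap.mulLeft k y ∘ₗ LinearMap.mul' k H ∘ₗ (antipode k).rTensor H) (augSub f).mkQ
    have hG₃ : ∀ (x : H) (t : H ⊗[k] H), (y * antipode k x) • (augSub f).mkQ.lTensor H t =
        G₃ ((TensorProduct.assoc k H H H).symm (x ⊗ₜ t)) := by
      intro x t
      induction t with
      | zero => simp
      | add a b ha hb => simp only [map_add, smul_add, TensorProduct.tmul_add, ha, hb]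
      | tmul a b => simp [G₃, TensorProduct.smul_tmul', mul_assoc]
    have hG : G = G₃ ∘ₗ (TensorProduct.assoc k H H H).symm.toLinearMap ∘ₗ comul.lTensor H := by
      ext x z
      exact hG₃ x (comul z)
    have hr : G₃ ∘ₗ comul.rTensor H = TensorProduct.map (LinearMap.mulLeft k y)
        (augSub f).mkQ ∘ₗ (Algebra.linearMap k H ∘ₗ counit).rTensor H := by
      ext x z
      simp [G₃]
    have h1 : G (comul h) = y ⊗ₜ (augSub f).mkQ h := by
      rw [hG]
      simp only [LinearMap.comp_apply, LinearEquiv.coe_coe, coassoc_symm_apply]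
      rw [← LinearMap.comp_apply, hr, LinearMap.rTensor_comp]
      simp [rTensor_counit_comul]
    rw [← h1]
    exact hGmem _

/-- If `g` is a family of `dim (H / A⁺H)` generators of the `A`-module `H`, then `g` is linearly
independent over `A`. -/
theorem injective_of_surjective [FiniteDimensional k H] (hf : Function.Injective f)
    (g : Fin (finrank k (H ⧸ augSub f)) → H)
    (hg : ∀ h, ∃ x : Fin (finrank k (H ⧸ augSub f)) → A, ∑ i, f (x i) * g i = h)
    (x : Fin (finrank k (H ⧸ augSub f)) → A) (hx : ∑ i, f (x i) * g i = 0) : x = 0 := by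
  let Θ : (Fin (finrank k (H ⧸ augSub f)) → H) →ₗ[H] H ⊗[k] (H ⧸ augSub f) :=
    Fintype.linearCombination H fun i => coact f (g i)
  have hΘ : ∀ x : Fin (finrank k (H ⧸ augSub f)) → A, Θ (fun i => f (x i)) = coact f (∑ i, f (x i) * g i) := by
    intro x
    simp [Θ, Fintype.linearCombination_apply, coact_mul]
  have hsurj : Function.Surjective Θ := by
    rw [← LinearMap.range_eq_top, eq_top_iff, ← span_range_coact f, Submodule.span_le]
    rintro _ ⟨h, rfl⟩
    obtain ⟨x, rfl⟩ := hg h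
    exact ⟨_, hΘ x⟩
  have hdim : finrank k (Fin (finrank k (H ⧸ augSub f)) → H) =
      finrank k (H ⊗[k] (H ⧸ augSub f)) := by
    rw [Module.finrank_tensorProduct, Module.finrank_pi_fintype]
    simp [mul_comm]
  have hinj : Function.Injective Θ :=
    (LinearMap.injective_iff_surjective_of_finrank_eq_finrank (f := Θ.restrictScalars k)
      hdim).2 hsurj
  have h0 : (fun i => f (x i)) = 0 := hinj (by rw [hΘ, hx, map_zero, map_zero])
  funext i
  exact hf (by simpa using congrFun h0 i)

end Injective
end Hopf
end NicholsZoeller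

/-- (Nichols–Zöller) If `A` and `H` are finite-dimensional Hopf algebras over a field `k`
and `f : A → H` is an injective bialgebra homomorphism, then `H` is free as a left
`A`-module, where `A` acts on `H` via `a • h = f a * h`. -/
theorem nichols_zoller (k A H : Type*) [Field k] [Ring A] [Ring H]
    [HopfAlgebra k A] [HopfAlgebra k H] [FiniteDimensional k A] [FiniteDimensional k H]
    (f : A →ₐc[k] H) (hf : Function.Injective f) :
    letI : Module A H := Module.compHom H (RingHomClass.toRingHom f)
    Module.Free A H := by
  letI : Module A H := Module.compHom H (RingHomClass.toRingHom f)
  have hsmul : ∀ (a : A) (h : H), a • h = f a * h := fun _ _ => rfl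
  have : IsScalarTower k A H := ⟨fun c a h => by
    rw [hsmul, hsmul, map_smul, smul_mul_assoc]⟩
  obtain ⟨φ, hφ⟩ := NicholsZoeller.exists_surjective_of_finrank_hom_le (k := k) (A := A) (M := H)
    (finrank k (H ⧸ NicholsZoeller.augSub f)) (by
      intro C
      have : FiniteDimensional k (H ⧸ Module.jacobson A H) :=
        FiniteDimensional.of_surjective ((Module.jacobson A H).mkQ.restrictScalars k)
          (Module.jacobson A H).mkQ_surjective
      have : FiniteDimensional k C :=
        FiniteDimensional.finiteDimensional_submodule (C.restrictScalars k)
      have hb := NicholsZoeller.isBound_quotient f C (Algebra.lsmul k k C)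
      have hb' : finrank k (NicholsZoeller.homs f (Algebra.lsmul k k C)) ≤
        finrank k (H ⧸ NicholsZoeller.augSub f) * finrank k C := by exact_mod_cast hb
      refine le_trans ?_ hb'
      let L : (H →ₗ[A] C) →ₗ[k] NicholsZoeller.homs f (Algebra.lsmul k k C) :=
        (LinearMap.restrictScalarsₗ k A H C k).codRestrict _ (fun g a h => g.map_smul a h)
      refine LinearMap.finrank_le_finrank_of_injective (f := L) ?_
      intro g g' h
      exact LinearMap.restrictScalars_injective k (congrArg Subtype.val h))
  have hφ' : ∀ x, φ x = ∑ i, f (x i) * φ (Pi.single i 1) := by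
    intro x
    conv_lhs => rw [← Finset.univ_sum_single x, map_sum]
    refine Finset.sum_congr rfl fun i _ => ?_
    rw [← hsmul, ← map_smul, ← Pi.single_smul', smul_eq_mul, mul_one]
  have hinj : Function.Injective φ := by
    rw [← LinearMap.ker_eq_bot, LinearMap.ker_eq_bot']
    intro x hx
    refine NicholsZoeller.injective_of_surjective f hf (fun i => φ (Pi.single i 1)) ?_ x
      ((hφ' x).symm.trans hx)
    intro h
    obtain ⟨x, rfl⟩ := hφ h
    exact ⟨x, (hφ' x).symm⟩
  exact Module.Free.of_equiv (LinearEquiv.ofBijective φ ⟨hinj, hφ⟩)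
end
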